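/- arXiv:math-ph/0105040 — 3 statements merged into one kernel-verified Lean document; each statement's English description precedes it below -/
import Mathlib

section
/- Shifted antisymmetrization identity: let m be an even integer, n an even integer, r ≥ 0 and s integers, and set ℓ := r + (n−m)/2; assume ℓ > r. For any nonzero complex B and nonzero complex A_{r+1},…,A_ℓ, ∑_{σ} sgn(σ)·∏_{a=r+1}^{ℓ} A_{σ(a)}^{n+1−2s+2r−2a} = (−1)^{ℓ−r−1}·∑_{σ} sgn(σ)·[ ∏_{a=r+1}^{ℓ−1}(1 − A_{σ(a)}²·B⁻²) · A_{σ(ℓ)}^{n−1−2s} · ∏_{a=r+1}^{ℓ−1} A_{σ(a)}^{n−1−2s+2r−2a} ], where both sums run over all permutations σ of {r+1,…,ℓ}. -/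
open Finset Equiv

/-!
Both antisymmetrizations are determinants. Put `p = n - 1 - 2s` and number the columns from `0`; on
the left, column `a` has entries `A_j ^ (p - 2a)`. Subtracting `B⁻²` times column `a` from column
`a + 1`, for all `a` from the last down, keeps the determinant and turns column `a + 1` into
`(1 - A_j² B⁻²) A_j ^ (p - 2 - 2a)`. Moving the untouched column `0` to the end is a cyclic
rotation, of sign `(-1) ^ (ℓ - r - 1)`, and gives the right-hand side up to that sign.
-/

section Determinant

variable {R : Type*} [CommRing R] {k : ℕ}

theorem det_eq_neg_one_pow_mul_det_submatrix_finRotate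
    (M : Matrix (Fin (k + 1)) (Fin (k + 1)) R) :
    M.det = (-1) ^ k * (M.submatrix id (finRotate (k + 1))).det := by
  rw [Matrix.det_permute', sign_finRotate, ← mul_assoc]
  push_cast
  rw [← mul_pow, neg_mul_neg, one_mul, one_pow, one_mul]

theorem det_eq_det_cons_sub_smul_pred (M : Matrix (Fin (k + 1)) (Fin (k + 1)) R) (c : Fin k → R) :
    M.det = (Matrix.of fun j => (Fin.cons (M j 0)
      fun i : Fin k => M j i.succ - c i * M j i.castSucc : Fin (k + 1) → R)).det := by
  refine Matrix.det_eq_of_forall_col_eq_smul_add_pred c (fun j => ?_) fun j i => ?_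
  · rw [Matrix.of_apply, Fin.cons_zero]
  · rw [Matrix.of_apply, Fin.cons_succ, sub_add_cancel]

theorem det_eq_neg_one_pow_mul_det_snoc_sub_smul_pred
    (M : Matrix (Fin (k + 1)) (Fin (k + 1)) R) (c : Fin k → R) :
    M.det = (-1) ^ k * (Matrix.of fun j => (Fin.snoc
      (fun i : Fin k => M j i.succ - c i * M j i.castSucc) (M j 0) : Fin (k + 1) → R)).det := by
  rw [det_eq_det_cons_sub_smul_pred M c, det_eq_neg_one_pow_mul_det_submatrix_finRotate]
  congr 2
  ext j i
  rw [Matrix.submatrix_apply, Matrix.of_apply, Matrix.of_apply, id_eq, finRotate_apply]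
  refine Fin.lastCases ?_ (fun i => ?_) i
  · rw [Fin.last_add_one, Fin.cons_zero, Fin.snoc_last]
  · rw [Fin.coeSucc_eq_succ, Fin.cons_succ, Fin.snoc_castSucc]

end Determinant

section Antisymmetrization

variable {ι α R : Type*} [Fintype ι] [DecidableEq ι] [CommRing R]

/-- The antisymmetrization `Asym f` of a function `f` of variables indexed by a finite type,
evaluated at `A`: the signed sum of the values of `f` at all rearrangements `A ∘ σ` of `A`. -/
def asym (f : (ι → α) → R) (A : ι → α) : R :=
  ∑ σ : Perm ι, ((Perm.sign σ : ℤ) : R) * f (A ∘ σ)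

theorem asym_congr {f g : (ι → α) → R} {A : ι → α} (h : ∀ σ : Perm ι, f (A ∘ σ) = g (A ∘ σ)) :
    asym f A = asym g A :=
  sum_congr rfl fun σ _ => by rw [h σ]

theorem asym_prod_eq_det (g : ι → α → R) (A : ι → α) :
    asym (fun X => ∏ i, g i (X i)) A = (Matrix.of fun j i => g i (A j)).det := by
  simp only [asym, Function.comp_apply, Matrix.det_apply', Matrix.of_apply]

theorem asym_prod_eq_neg_one_pow_mul_asym {k : ℕ} (g : Fin (k + 1) → α → R) (c : Fin k → R)
    (A : Fin (k + 1) → α) :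
    asym (fun X => ∏ i, g i (X i)) A =
      (-1) ^ k * asym (fun X => (∏ i : Fin k, (g i.succ (X i.castSucc) -
        c i * g i.castSucc (X i.castSucc))) * g 0 (X (Fin.last k))) A := by
  let h : Fin (k + 1) → α → R :=
    Fin.snoc (fun i x => g i.succ x - c i * g i.castSucc x) (g 0)
  have asym_h : asym (fun X => (∏ i : Fin k, (g i.succ (X i.castSucc) -
      c i * g i.castSucc (X i.castSucc))) * g 0 (X (Fin.last k))) A =
      asym (fun X => ∏ i, h i (X i)) A :=
    asym_congr fun σ => by simp only [h, Fin.prod_univ_castSucc, Fin.snoc_castSucc, Fin.snoc_last]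
  rw [asym_h, asym_prod_eq_det, asym_prod_eq_det, det_eq_neg_one_pow_mul_det_snoc_sub_smul_pred _ c]
  congr 2
  ext j i
  refine Fin.lastCases ?_ (fun i => ?_) i <;>
    simp only [h, Matrix.of_apply, Fin.snoc_castSucc, Fin.snoc_last]

end Antisymmetrization

theorem prod_filter_val_lt_eq_prod_castSucc {M : Type*} [CommMonoid M] {k : ℕ}
    (f : Fin (k + 1) → M) :
    ∏ a ∈ univ.filter (fun a : Fin (k + 1) => (a : ℕ) < k), f a = ∏ i : Fin k, f i.castSucc := by
  rw [prod_filter, Fin.prod_univ_castSucc]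
  simp

section Field

variable {K : Type*} [Field K]

theorem zpow_sub_mul_zpow_eq_one_sub_mul {x : K} (hx : x ≠ 0) (q d : ℤ) (c : K) :
    x ^ (q - d) - c * x ^ q = (1 - x ^ d * c) * x ^ (q - d) := by
  have hq : x ^ q = x ^ d * x ^ (q - d) := by rw [← zpow_add₀ hx, add_sub_cancel]
  rw [hq]
  ring

theorem asym_shifted_general {N : ℕ} (hN : 0 < N) (p d : ℤ) (c : K) (A : Fin N → K)
    (hA : ∀ a, A a ≠ 0) :
    asym (fun X : Fin N → K => ∏ a, X a ^ (p - d * (a : ℕ))) A =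
      (-1) ^ (N - 1) * asym (fun X : Fin N → K =>
        (∏ a ∈ univ.filter (fun a : Fin N => (a : ℕ) < N - 1), (1 - X a ^ d * c)) *
          X ⟨N - 1, Nat.sub_one_lt_of_lt hN⟩ ^ p *
          ∏ a ∈ univ.filter (fun a : Fin N => (a : ℕ) < N - 1), X a ^ (p - d - d * (a : ℕ))) A := by
  obtain ⟨k, rfl⟩ := Nat.exists_eq_add_one.mpr hN
  rw [asym_prod_eq_neg_one_pow_mul_asym (fun a x => x ^ (p - d * (a : ℕ))) fun _ => c]
  refine congrArg _ (asym_congr fun σ => ?_)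
  simp only [Nat.add_sub_cancel, prod_filter_val_lt_eq_prod_castSucc]
  rw [mul_right_comm, ← prod_mul_distrib]
  congr 1
  · refine prod_congr rfl fun i _ => ?_
    have hexp : p - d * (i.succ : ℕ) = p - d * (i : ℕ) - d := by
      rw [Fin.val_succ]; push_cast; ring
    rw [hexp, sub_right_comm p d, Fin.val_castSucc]
    exact zpow_sub_mul_zpow_eq_one_sub_mul (hA _) _ _ _
  · rw [Fin.val_zero, Nat.cast_zero, mul_zero, sub_zero]
    rfl

end Field

/-- Shifted antisymmetrization identity: `m, n` even integers, `r ≥ 0`, `s`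
integers, `ℓ := r + (n−m)/2 > r`; for nonzero `B` and nonzero
`A_{r+1},…,A_ℓ` (indexed by `a : Fin (ℓ−r)` with actual index `r+1+a`),
`Asym ∏_{a=r+1}^{ℓ} A_a^{n+1−2s+2r−2a}
 = (−1)^{ℓ−r−1}·Asym (∏_{a=r+1}^{ℓ−1}(1 − A_a²·B⁻²)·A_ℓ^{n−1−2s}
     ·∏_{a=r+1}^{ℓ−1} A_a^{n−1−2s+2r−2a})`. -/
theorem asym_shifted (m n : ℤ) (hm : Even m) (hn : Even n) (r : ℕ) (s : ℤ)
    (ℓ : ℕ) (hℓ : (ℓ : ℤ) = r + (n - m) / 2) (hrℓ : r < ℓ)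
    (B : ℂ) (hB : B ≠ 0) (A : Fin (ℓ - r) → ℂ) (hA : ∀ a, A a ≠ 0) :
    ∑ σ : Equiv.Perm (Fin (ℓ - r)), ((Equiv.Perm.sign σ : ℤ) : ℂ) *
        ∏ a, (A (σ a)) ^ (n + 1 - 2 * s + 2 * r - 2 * ((r : ℤ) + 1 + (a : ℕ))) =
      (-1 : ℂ) ^ (ℓ - r - 1) *
        ∑ σ : Equiv.Perm (Fin (ℓ - r)), ((Equiv.Perm.sign σ : ℤ) : ℂ) *
          ((∏ a ∈ Finset.univ.filter (fun a : Fin (ℓ - r) => (a : ℕ) < ℓ - r - 1),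
              (1 - (A (σ a)) ^ 2 * (B ^ 2)⁻¹)) *
            (A (σ ⟨ℓ - r - 1, by omega⟩)) ^ (n - 1 - 2 * s) *
            ∏ a ∈ Finset.univ.filter (fun a : Fin (ℓ - r) => (a : ℕ) < ℓ - r - 1),
              (A (σ a)) ^ (n - 1 - 2 * s + 2 * r - 2 * ((r : ℤ) + 1 + (a : ℕ)))) := by
  have hexp (t : ℤ) (a : ℕ) : t + 2 * r - 2 * (r + 1 + a) = t - 2 - 2 * a := by ring
  simpa only [asym, Function.comp_apply, zpow_ofNat, hexp,
    show n + 1 - 2 * s - 2 = n - 1 - 2 * s by ring] using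
    asym_shifted_general (Nat.sub_pos_of_lt hrℓ) (n - 1 - 2 * s) 2 (B ^ 2)⁻¹ A hA
end

section
/- Factorization of the cycles P_n under the kinematical specialization: let m ≥ 0 and n ≥ m+2 be even integers, r ∈ ℕ, ℓ := r + (n−m)/2, s ∈ ℕ, k₁,…,k_r ∈ ℕ, g : ℂ → ℂ a function with g(−z) = g(z) for all z, A₁,…,A_ℓ nonzero complex numbers, and B₁,…,B_{n−2}, B nonzero complex numbers such that B₁,…,B_{n−2}, B, −B are pairwise distinct. Then ∑_{σ} sgn(σ)·P'_n(A₁,…,A_r, A_{σ(r+1)},…,A_{σ(ℓ)} | B₁,…,B_{n−2}, B, −B) = (−1)^{(n+m)/2 + s + ℓ−r−1} · B^{2s} · g(B) · ∏_{a=1}^{r}(1 − A_a²·B⁻²) · ∑_{σ} sgn(σ)·[ ∏_{a=r+1}^{ℓ−1}(1 − A_{σ(a)}²·B⁻²) · A_{σ(ℓ)}^{n−1−2s} · P'_{n−2}(A₁,…,A_r, A_{σ(r+1)},…,A_{σ(ℓ−1)} | B₁,…,B_{n−2}) ], where both sums run over all permutations σ of {r+1,…,ℓ}. -/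
open Finset Equiv

/-- The `N×N` matrix defining `D_N(A₁,…,A_r | B₁,…,B_N)`: first `(N+m)/2` rows
`(B_j^{2i})_j`, `i = 0,…,(N+m−2)/2`; remaining `(N−m)/2` rows
`(g(B_j)·B_j^{2p−1}·∏_{a=1}^{r}(1 − A_a²·B_j⁻²))_j`, `p = 1,…,(N−m)/2`. -/
noncomputable def Dmat (m N : ℕ) (g : ℂ → ℂ) (r : ℕ) (A : Fin r → ℂ)
    (B : Fin N → ℂ) : Matrix (Fin N) (Fin N) ℂ :=
  fun i j =>
    if (i : ℕ) < (N + m) / 2 then B j ^ (2 * (i : ℕ))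
    else g (B j) * B j ^ (2 * ((i : ℕ) - (N + m) / 2) + 1) *
      ∏ a, (1 - (A a) ^ 2 * (B j ^ 2)⁻¹)

/-- `D_N(A₁,…,A_r | B₁,…,B_N) := det M / ∏_{j<j'}(B_j − B_{j'})`. -/
noncomputable def Dval (m N : ℕ) (g : ℂ → ℂ) (r : ℕ) (A : Fin r → ℂ)
    (B : Fin N → ℂ) : ℂ :=
  (Dmat m N g r A B).det /
    ∏ p ∈ Finset.univ.filter (fun p : Fin N × Fin N => p.1 < p.2), (B p.1 - B p.2)

/-- The cycle
`P'_N(A₁,…,A_r, C₁,…,C_q | B₁,…,B_N) := (∏ B_j)^s · ∏_{a=1}^{r} A_a^{k_a}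
  · ∏_{b=1}^{q} C_b^{N+1−2s+2r−2(r+b)} · D_N(A | B)`,
where `C_b` stands for `A_{r+b}` and `q` is instantiated to `(N−m)/2`. -/
noncomputable def Pcyc (m N r s q : ℕ) (k : Fin r → ℕ) (g : ℂ → ℂ)
    (A : Fin r → ℂ) (C : Fin q → ℂ) (B : Fin N → ℂ) : ℂ :=
  (∏ j, B j) ^ s * (∏ a, A a ^ k a) *
    (∏ b, C b ^ ((N : ℤ) + 1 - 2 * (s : ℤ) + 2 * (r : ℤ) - 2 * ((r : ℤ) + 1 + (b : ℕ)))) *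
    Dval m N g r A B

/-- The vector `(B₁, …, B_{n−2}, B, −B)` of length `n`. -/
def extB (n : ℕ) (B : Fin (n - 2) → ℂ) (b : ℂ) : Fin n → ℂ :=
  fun j => if h : (j : ℕ) < n - 2 then B ⟨j, h⟩ else if (j : ℕ) = n - 2 then b else -b

/-! In terms of `x_j = B_j²` and the odd function `y(z) = g(z) z ∏ₐ (1 - Aₐ² z⁻²)`, the matrix of
`D_N` has rows `x_j^i` followed by rows `y(B_j) x_j^i`. Subtracting `B²` times the preceding row
inside each block leaves the two leading rows `1` and `y(B_j)` alone and turns the others into those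
of a matrix of the same shape and two rows fewer, with column `j` multiplied by `x_j - B²`. These
rows vanish in the columns of `B` and `-B`, where the leading rows form `[[1, 1], [y(B), -y(B)]]`,
so the determinant of `D_{N-2}` splits off, and the product of the `x_j - B²` cancels against the
Vandermonde denominator. The antisymmetrization over the `C_b` is a Vandermonde determinant in the
`C_b⁻²`, and the analogous column operation produces the factors `1 - C_b² B⁻²`. -/

section Determinant

variable {R : Type*} [CommRing R]

lemma det_eq_mul_det_submatrix_of_col_eq_zero {n : ℕ} (X : Matrix (Fin (n + 1)) (Fin (n + 1)) R)
    (i j : Fin (n + 1)) (hX : ∀ k, X (i.succAbove k) j = 0) :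
    X.det = (-1) ^ (i + j : ℕ) * X i j * (X.submatrix i.succAbove j.succAbove).det := by
  rw [Matrix.det_succ_column X j, Fin.sum_univ_succAbove _ i]
  simp [hX]

lemma det_eq_minor_mul_det_submatrix_of_last_cols_eq_zero {N : ℕ}
    (X : Matrix (Fin (N + 2)) (Fin (N + 2)) R) (p : Fin (N + 1))
    (hX : ∀ k, X (p.succAbove k).succ (Fin.last N).castSucc = 0)
    (hX' : ∀ k, X (p.succAbove k).succ (Fin.last (N + 1)) = 0) :
    X.det = (-1) ^ (p : ℕ) *
      (X 0 (Fin.last N).castSucc * X p.succ (Fin.last (N + 1)) -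
        X 0 (Fin.last (N + 1)) * X p.succ (Fin.last N).castSucc) *
      (X.submatrix (fun i ↦ (p.succAbove i).succ) (fun j ↦ j.castSucc.castSucc)).det := by
  have minor_zero :
      (X.submatrix Fin.succ Fin.castSucc).det =
        (-1) ^ (p + N : ℕ) * X p.succ (Fin.last N).castSucc *
        (X.submatrix (fun i ↦ (p.succAbove i).succ) (fun j ↦ j.castSucc.castSucc)).det := by
    rw [det_eq_mul_det_submatrix_of_col_eq_zero _ p (Fin.last N) hX]
    simp [Function.comp_def]
  have minor_succ :
      (X.submatrix p.succ.succAbove Fin.castSucc).det = (-1) ^ N * X 0 (Fin.last N).castSucc *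
        (X.submatrix (fun i ↦ (p.succAbove i).succ) (fun j ↦ j.castSucc.castSucc)).det := by
    rw [det_eq_mul_det_submatrix_of_col_eq_zero _ 0 (Fin.last N) (by simpa using hX)]
    simp [Function.comp_def]
  have expand_last_col :
      X.det = (-1) ^ (N + 1) * X 0 (Fin.last (N + 1)) * (X.submatrix Fin.succ Fin.castSucc).det +
        (-1) ^ (p + 1 + (N + 1)) * X p.succ (Fin.last (N + 1)) *
          (X.submatrix p.succ.succAbove Fin.castSucc).det := by
    rw [Matrix.det_succ_column X (Fin.last (N + 1)), Fin.sum_univ_succ, Fin.sum_univ_succAbove _ p]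
    simp [hX']
  have sign_sq : ((-1 : R) ^ N) * (-1) ^ N = 1 := by rw [← mul_pow]; simp
  rw [expand_last_col, minor_zero, minor_succ]
  simp only [pow_add, pow_one]
  linear_combination (-1) ^ (p : ℕ) *
    (X 0 (Fin.last N).castSucc * X p.succ (Fin.last (N + 1)) -
      X 0 (Fin.last (N + 1)) * X p.succ (Fin.last N).castSucc) *
    (X.submatrix (fun i ↦ (p.succAbove i).succ) (fun j ↦ j.castSucc.castSucc)).det * sign_sq

end Determinant

section BlockVandermonde

variable {R ι : Type*} [CommRing R] {M : ℕ}

/-- The block Vandermonde matrix with `M` rows: the first `p` rows are the powers `x_j^i`, the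
others are `y_j x_j^i`, with `i` starting from `0` in both blocks. The matrix of `D_N` has this
form. -/
def blockVandermonde (p : ℕ) (x y : ι → R) : Matrix (Fin M) ι R :=
  Matrix.of fun i j ↦ if (i : ℕ) < p then x j ^ (i : ℕ) else y j * x j ^ (i - p : ℕ)

lemma blockVandermonde_zero (p : ℕ) (x y : ι → R) (j : ι) :
    blockVandermonde (M := M + 1) (p + 1) x y 0 j = 1 := by
  simp [blockVandermonde]

lemma blockVandermonde_succ_self (p : Fin M) (x y : ι → R) (j : ι) :
    blockVandermonde (p + 1) x y p.succ j = y j := by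
  simp [blockVandermonde]

lemma blockVandermonde_succAbove_castSucc (p : Fin (M + 1)) (x y : ι → R) (k : Fin M) (j : ι) :
    blockVandermonde (p + 1) x y (p.succAbove k).castSucc j = blockVandermonde p x y k j := by
  rcases lt_or_ge k.castSucc p with hk | hk
  · have hk' : (k : ℕ) < p := hk
    simp [blockVandermonde, Fin.succAbove_of_castSucc_lt p k hk, hk', hk'.le.not_gt]
  · have hk' : ¬ (k : ℕ) < p := not_lt.2 hk
    simp [blockVandermonde, Fin.succAbove_of_le_castSucc p k hk, hk']

lemma blockVandermonde_succAbove_succ (p : Fin (M + 1)) (x y : ι → R) (k : Fin M) (j : ι) :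
    blockVandermonde (p + 1) x y (p.succAbove k).succ j = x j * blockVandermonde p x y k j := by
  rcases lt_or_ge k.castSucc p with hk | hk
  · have hk' : (k : ℕ) < p := hk
    simp [blockVandermonde, Fin.succAbove_of_castSucc_lt p k hk, hk', pow_succ']
  · have hk' : ¬ (k : ℕ) < p := not_lt.2 hk
    have exponent : (k + 1 - p : ℕ) = k - p + 1 := by omega
    have hk'' : ¬ (k + 1 : ℕ) < p := by omega
    simp [blockVandermonde, Fin.succAbove_of_le_castSucc p k hk, hk'', hk', exponent, pow_succ',
      mul_left_comm]

/-- The result of subtracting from each row of `blockVandermonde (p + 1) x y`, except the leading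
rows `0` and `p + 1` of its blocks, `c` times the preceding row. -/
def reducedBlockVandermonde (p : Fin (M + 1)) (c : R) (x y : ι → R) : Matrix (Fin (M + 2)) ι R :=
  Matrix.of (Fin.cons 1 (p.insertNth y fun k j ↦ (x j - c) * blockVandermonde p x y k j))

lemma reducedBlockVandermonde_zero (p : Fin (M + 1)) (c : R) (x y : ι → R) (j : ι) :
    reducedBlockVandermonde p c x y 0 j = 1 := rfl

lemma reducedBlockVandermonde_succ_self (p : Fin (M + 1)) (c : R) (x y : ι → R) (j : ι) :
    reducedBlockVandermonde p c x y p.succ j = y j := by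
  simp [reducedBlockVandermonde]

lemma reducedBlockVandermonde_succAbove_succ (p : Fin (M + 1)) (c : R) (x y : ι → R) (k : Fin M)
    (j : ι) : reducedBlockVandermonde p c x y (p.succAbove k).succ j =
      (x j - c) * blockVandermonde p x y k j := by
  simp [reducedBlockVandermonde]

lemma det_reducedBlockVandermonde (p : Fin (M + 1)) (c : R) (x y : Fin (M + 2) → R) :
    (reducedBlockVandermonde p c x y).det = (blockVandermonde (p + 1) x y).det := by
  symm
  apply Matrix.det_eq_of_forall_row_eq_smul_add_pred (fun i ↦ if i = p then 0 else c)
  · simp [blockVandermonde_zero, reducedBlockVandermonde_zero]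
  · intro i j
    rcases Fin.eq_self_or_eq_succAbove p i with rfl | ⟨k, rfl⟩
    · simp [blockVandermonde_succ_self, reducedBlockVandermonde_succ_self]
    · simp only [blockVandermonde_succAbove_succ, blockVandermonde_succAbove_castSucc,
        reducedBlockVandermonde_succAbove_succ, Fin.succAbove_ne, if_false]
      ring

lemma det_blockVandermonde_of_last_eq_neg (p : Fin (M + 1)) (x y : Fin (M + 2) → R) (c d : R)
    (hx : x (Fin.last M).castSucc = c) (hx' : x (Fin.last (M + 1)) = c)
    (hy : y (Fin.last M).castSucc = d) (hy' : y (Fin.last (M + 1)) = -d) :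
    (blockVandermonde (p + 1) x y).det =
      (-1) ^ (p + 1 : ℕ) * (2 * d) * (∏ j : Fin M, (x j.castSucc.castSucc - c)) *
        (blockVandermonde p (fun j : Fin M ↦ x j.castSucc.castSucc)
          (fun j ↦ y j.castSucc.castSucc)).det := by
  have minor_eq :
      (reducedBlockVandermonde p c x y).submatrix (fun i ↦ (p.succAbove i).succ)
        (fun j ↦ j.castSucc.castSucc) = Matrix.of fun i j ↦ (x j.castSucc.castSucc - c) *
          blockVandermonde p (fun j : Fin M ↦ x j.castSucc.castSucc)
            (fun j ↦ y j.castSucc.castSucc) i j := by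
    ext i j
    exact reducedBlockVandermonde_succAbove_succ p c x y i _
  rw [← det_reducedBlockVandermonde p c,
    det_eq_minor_mul_det_submatrix_of_last_cols_eq_zero _ p
      (by simp [reducedBlockVandermonde_succAbove_succ, hx])
      (by simp [reducedBlockVandermonde_succAbove_succ, hx']),
    minor_eq, Matrix.det_mul_row]
  simp only [reducedBlockVandermonde_zero, reducedBlockVandermonde_succ_self, hy, hy']
  ring

end BlockVandermonde

section Alternant

lemma det_vandermonde_eq_sum_perm_sub {R : Type*} [CommRing R] {q : ℕ} (t : Fin (q + 1) → R)
    (β : R) : (Matrix.vandermonde t).det = (-1) ^ q * ∑ σ : Perm (Fin (q + 1)),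
      ((Perm.sign σ : ℤ) : R) *
        ∏ b : Fin q, ((t (σ b.castSucc) - β) * t (σ b.castSucc) ^ (b : ℕ)) := by
  let reduced : Matrix (Fin (q + 1)) (Fin (q + 1)) R :=
    Matrix.of fun a ↦ Fin.cons 1 fun b : Fin q ↦ (t a - β) * t a ^ (b : ℕ)
  have det_reduced : (Matrix.vandermonde t).det = reduced.det := by
    apply Matrix.det_eq_of_forall_col_eq_smul_add_pred (fun _ ↦ β)
    · simp [reduced]
    · intro a b
      simp only [Matrix.vandermonde_apply, Fin.val_succ, Fin.val_castSucc, reduced,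
        Matrix.of_apply, Fin.cons_succ]
      ring
  have det_rotated : (reduced.submatrix id (finRotate (q + 1))).det = (-1) ^ q * reduced.det := by
    rw [Matrix.det_permute', sign_finRotate]
    simp
  have rotated_apply (a : Fin (q + 1)) (b : Fin q) :
      reduced a (finRotate (q + 1) b.castSucc) = (t a - β) * t a ^ (b : ℕ) := by
    simp [reduced]
  have rotated_last (a : Fin (q + 1)) : reduced a (finRotate (q + 1) (Fin.last q)) = 1 := by
    rw [finRotate_last]
    rfl
  have sum_eq : (reduced.submatrix id (finRotate (q + 1))).det = ∑ σ : Perm (Fin (q + 1)),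
      ((Perm.sign σ : ℤ) : R) *
        ∏ b : Fin q, ((t (σ b.castSucc) - β) * t (σ b.castSucc) ^ (b : ℕ)) := by
    simp only [Matrix.det_apply', Fin.prod_univ_castSucc, Matrix.submatrix_apply, id,
      rotated_apply, rotated_last, mul_one]
  rw [← sum_eq, det_rotated, det_reduced, ← mul_assoc, ← mul_pow]
  simp

lemma sum_sign_mul_prod_zpow_eq {K : Type*} [Field K] {q : ℕ} (C : Fin (q + 1) → K)
    (hC : ∀ b, C b ≠ 0) (β : K) (e : ℤ) :
    ∑ σ : Perm (Fin (q + 1)), ((Perm.sign σ : ℤ) : K) * ∏ b, C (σ b) ^ (e - 2 * ((b : ℕ) : ℤ)) =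
      (-1) ^ q * ∑ σ : Perm (Fin (q + 1)), ((Perm.sign σ : ℤ) : K) *
        ((∏ b : Fin q, (1 - C (σ b.castSucc) ^ 2 * β)) * C (σ (Fin.last q)) ^ e *
          ∏ b : Fin q, C (σ b.castSucc) ^ (e - 2 - 2 * ((b : ℕ) : ℤ))) := by
  have zpow_sub_two_mul (a : Fin (q + 1)) (f : ℤ) (b : ℕ) :
      C a ^ (f - 2 * (b : ℤ)) = C a ^ f * ((C a ^ 2)⁻¹) ^ b := by
    rw [zpow_sub₀ (hC a), zpow_mul, zpow_natCast, inv_pow, div_eq_mul_inv, zpow_ofNat]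
  have summand_left (σ : Perm (Fin (q + 1))) :
      ∏ b, C (σ b) ^ (e - 2 * ((b : ℕ) : ℤ)) =
        (∏ a, C a ^ e) * ∏ b, Matrix.vandermonde (fun a ↦ (C a ^ 2)⁻¹) (σ b) b := by
    simp only [zpow_sub_two_mul, Finset.prod_mul_distrib, Matrix.vandermonde_apply,
      Equiv.prod_comp σ fun a ↦ C a ^ e]
  have summand_right (σ : Perm (Fin (q + 1))) :
      (∏ b : Fin q, (1 - C (σ b.castSucc) ^ 2 * β)) * C (σ (Fin.last q)) ^ e *
          ∏ b : Fin q, C (σ b.castSucc) ^ (e - 2 - 2 * ((b : ℕ) : ℤ)) =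
        (∏ a, C a ^ e) * ∏ b : Fin q,
          (((C (σ b.castSucc) ^ 2)⁻¹ - β) * ((C (σ b.castSucc) ^ 2)⁻¹) ^ (b : ℕ)) := by
    rw [← Equiv.prod_comp σ fun a ↦ C a ^ e, Fin.prod_univ_castSucc, mul_right_comm,
      mul_right_comm _ (C (σ (Fin.last q)) ^ e), ← Finset.prod_mul_distrib,
      ← Finset.prod_mul_distrib]
    congr 1
    refine Finset.prod_congr rfl fun b _ ↦ ?_
    have hCb := hC (σ b.castSucc)
    rw [zpow_sub_two_mul, zpow_sub₀ hCb, zpow_ofNat]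
    field_simp
  simp only [summand_left, summand_right, mul_left_comm _ (∏ a, C a ^ e), ← Finset.mul_sum]
  rw [← Matrix.det_apply', det_vandermonde_eq_sum_perm_sub _ β, mul_left_comm]

end Alternant

lemma prod_filter_lt_univ_castSucc {α : Type*} [CommMonoid α] {n : ℕ}
    (f : Fin (n + 1) → Fin (n + 1) → α) :
    ∏ p ∈ univ.filter (fun p : Fin (n + 1) × Fin (n + 1) ↦ p.1 < p.2), f p.1 p.2 =
      (∏ p ∈ univ.filter (fun p : Fin n × Fin n ↦ p.1 < p.2), f p.1.castSucc p.2.castSucc) *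
        ∏ i : Fin n, f i.castSucc (Fin.last n) := by
  have last_not_lt (i : Fin n) : ¬ Fin.last n < i.castSucc := not_lt.2 (Fin.le_last _)
  simp only [Finset.prod_filter, Fintype.prod_prod_type, Fin.prod_univ_castSucc,
    Fin.castSucc_lt_castSucc_iff, Fin.castSucc_lt_last, last_not_lt, lt_irrefl, if_true, if_false,
    Finset.prod_const_one, Finset.prod_mul_distrib, mul_one]

lemma prod_filter_val_lt_univ_castSucc {α : Type*} [CommMonoid α] {n : ℕ} (f : Fin (n + 1) → α) :
    ∏ i ∈ univ.filter (fun i : Fin (n + 1) ↦ (i : ℕ) < n), f i = ∏ i : Fin n, f i.castSucc := by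
  simp [Finset.prod_filter, Fin.prod_univ_castSucc]

section ExtB

variable {N : ℕ} (B : Fin N → ℂ) (b : ℂ)

lemma extB_castSucc_castSucc (j : Fin N) : extB (N + 2) B b j.castSucc.castSucc = B j := by
  simp [extB]

lemma extB_last_castSucc : extB (N + 2) B b (Fin.last N).castSucc = b := by
  simp [extB]

lemma extB_last : extB (N + 2) B b (Fin.last (N + 1)) = -b := by
  simp [extB]

lemma prod_extB : ∏ j, extB (N + 2) B b j = (∏ j, B j) * -b ^ 2 := by
  rw [Fin.prod_univ_castSucc, Fin.prod_univ_castSucc]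
  simp only [extB_castSucc_castSucc, extB_last_castSucc, extB_last]
  ring

lemma prod_filter_lt_extB_sub_extB :
    ∏ p ∈ univ.filter (fun p : Fin (N + 2) × Fin (N + 2) ↦ p.1 < p.2),
        (extB (N + 2) B b p.1 - extB (N + 2) B b p.2) =
      (2 * b * ∏ j, (B j ^ 2 - b ^ 2)) *
        ∏ p ∈ univ.filter (fun p : Fin N × Fin N ↦ p.1 < p.2), (B p.1 - B p.2) := by
  rw [prod_filter_lt_univ_castSucc fun i j ↦ extB (N + 2) B b i - extB (N + 2) B b j,
    prod_filter_lt_univ_castSucc fun i j : Fin (N + 1) ↦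
      extB (N + 2) B b i.castSucc - extB (N + 2) B b j.castSucc, Fin.prod_univ_castSucc]
  simp only [extB_castSucc_castSucc, extB_last_castSucc, extB_last, sq_sub_sq,
    Finset.prod_mul_distrib, sub_neg_eq_add]
  ring

variable {B b}

lemma ne_zero_of_injective_extB (hB : Function.Injective (extB (N + 2) B b)) : b ≠ 0 := by
  rintro rfl
  have last_eq := hB ((extB_last_castSucc B 0).trans (neg_zero.symm.trans (extB_last B 0).symm))
  exact (Fin.castSucc_lt_last _).ne last_eq

lemma sq_ne_sq_of_injective_extB (hB : Function.Injective (extB (N + 2) B b)) (j : Fin N) :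
    B j ^ 2 ≠ b ^ 2 := by
  intro hsq
  rcases sq_eq_sq_iff_eq_or_eq_neg.1 hsq with h | h
  · have index_eq :=
      hB ((extB_castSucc_castSucc B b j).trans (h.trans (extB_last_castSucc B b).symm))
    exact (Fin.castSucc_lt_last j).ne (Fin.castSucc_injective _ index_eq)
  · have index_eq := hB ((extB_castSucc_castSucc B b j).trans (h.trans (extB_last B b).symm))
    exact (Fin.castSucc_lt_last _).ne index_eq

end ExtB

section Factorization

variable {r : ℕ} (g : ℂ → ℂ) (A : Fin r → ℂ)

/-- The function `z ↦ g(z) z ∏ₐ (1 - Aₐ² z⁻²)` whose values, times even powers of the `B_j`, are the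
entries of the lower rows of the matrix of `D_N`. -/
noncomputable def oddWeight (z : ℂ) : ℂ :=
  g z * z * ∏ a, (1 - A a ^ 2 * (z ^ 2)⁻¹)

variable {g} in
lemma oddWeight_neg (hg : ∀ z, g (-z) = g z) (z : ℂ) : oddWeight g A (-z) = -oddWeight g A z := by
  simp [oddWeight, hg]

lemma Dmat_eq_blockVandermonde (m : ℕ) {N : ℕ} (B : Fin N → ℂ) :
    Dmat m N g r A B =
      blockVandermonde ((N + m) / 2) (fun j ↦ B j ^ 2) (fun j ↦ oddWeight g A (B j)) := by
  ext i j
  simp only [Dmat, blockVandermonde, oddWeight, Matrix.of_apply, pow_mul, pow_succ]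
  split_ifs <;> ring

variable {g} {m N : ℕ} {B : Fin N → ℂ} {b : ℂ}

lemma det_Dmat_extB (hm : m ≤ N) (hg : ∀ z, g (-z) = g z) :
    (Dmat m (N + 2) g r A (extB (N + 2) B b)).det =
      (-1) ^ ((N + m) / 2 + 1) * (2 * oddWeight g A b) * (∏ j, (B j ^ 2 - b ^ 2)) *
        (Dmat m N g r A B).det := by
  have half_eq : (N + 2 + m) / 2 = (N + m) / 2 + 1 := by omega
  rw [Dmat_eq_blockVandermonde, Dmat_eq_blockVandermonde, half_eq,
    det_blockVandermonde_of_last_eq_neg ⟨(N + m) / 2, by omega⟩ _ _ (b ^ 2) (oddWeight g A b)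
      (by simp only [extB_last_castSucc]) (by simp only [extB_last, neg_sq])
      (by simp only [extB_last_castSucc]) (by simp only [extB_last, oddWeight_neg A hg])]
  simp only [extB_castSucc_castSucc]

lemma Dval_extB (hm : m ≤ N) (hg : ∀ z, g (-z) = g z)
    (hB : Function.Injective (extB (N + 2) B b)) :
    Dval m (N + 2) g r A (extB (N + 2) B b) =
      (-1) ^ ((N + m) / 2 + 1) * (g b * ∏ a, (1 - A a ^ 2 * (b ^ 2)⁻¹)) * Dval m N g r A B := by
  have factor_ne_zero : 2 * b * ∏ j, (B j ^ 2 - b ^ 2) ≠ 0 :=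
    mul_ne_zero (mul_ne_zero two_ne_zero (ne_zero_of_injective_extB hB))
      (Finset.prod_ne_zero_iff.2 fun j _ ↦ sub_ne_zero.2 (sq_ne_sq_of_injective_extB hB j))
  have numerator_eq :
      (-1) ^ ((N + m) / 2 + 1) * (2 * oddWeight g A b) * (∏ j, (B j ^ 2 - b ^ 2)) *
          (Dmat m N g r A B).det =
        2 * b * (∏ j, (B j ^ 2 - b ^ 2)) * ((-1) ^ ((N + m) / 2 + 1) *
          (g b * ∏ a, (1 - A a ^ 2 * (b ^ 2)⁻¹)) * (Dmat m N g r A B).det) := by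
    rw [oddWeight]
    ring
  rw [Dval, Dval, det_Dmat_extB A hm hg, prod_filter_lt_extB_sub_extB, numerator_eq,
    mul_div_mul_left _ _ factor_ne_zero, mul_div_assoc]

lemma Pcyc_eq_mul_prod_zpow (g : ℂ → ℂ) (m s : ℕ) {q : ℕ} (k : Fin r → ℕ) (C : Fin q → ℂ)
    (B : Fin N → ℂ) :
    Pcyc m N r s q k g A C B =
      ((∏ j, B j) ^ s * (∏ a, A a ^ k a) * Dval m N g r A B) *
        ∏ i, C i ^ ((N : ℤ) - 1 - 2 * s - 2 * ((i : ℕ) : ℤ)) := by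
  have exponent (i : ℕ) :
      (N : ℤ) + 1 - 2 * s + 2 * r - 2 * (r + 1 + i) = N - 1 - 2 * s - 2 * i := by ring
  simp only [Pcyc, exponent]
  ring

lemma Pcyc_extB (hm : m ≤ N) (hg : ∀ z, g (-z) = g z) (s : ℕ) {q : ℕ} (k : Fin r → ℕ)
    (C : Fin q → ℂ) (hB : Function.Injective (extB (N + 2) B b)) :
    Pcyc m (N + 2) r s q k g A C (extB (N + 2) B b) =
      (-1) ^ ((N + m) / 2 + 1 + s) * b ^ (2 * s) * g b * (∏ a, (1 - A a ^ 2 * (b ^ 2)⁻¹)) *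
        ((∏ j, B j) ^ s * (∏ a, A a ^ k a) * Dval m N g r A B) *
          ∏ i, C i ^ ((N : ℤ) + 1 - 2 * s - 2 * ((i : ℕ) : ℤ)) := by
  have exponent : ((N + 2 : ℕ) : ℤ) - 1 - 2 * s = N + 1 - 2 * s := by push_cast; ring
  have prod_pow : (∏ j, extB (N + 2) B b j) ^ s = (∏ j, B j) ^ s * ((-1) ^ s * b ^ (2 * s)) := by
    rw [prod_extB, mul_pow, neg_pow, ← pow_mul]
  rw [Pcyc_eq_mul_prod_zpow, exponent, prod_pow, Dval_extB A hm hg hB, pow_add _ _ s]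
  ring

theorem Pcyc_factorization_general (hm : m ≤ N) (hg : ∀ z, g (-z) = g z) (s q : ℕ)
    (k : Fin r → ℕ) (C : Fin (q + 1) → ℂ) (hC : ∀ i, C i ≠ 0)
    (_hB : ∀ j, B j ≠ 0) (hdist : Function.Injective (extB (N + 2) B b)) :
    ∑ σ : Perm (Fin (q + 1)), ((Perm.sign σ : ℤ) : ℂ) *
        Pcyc m (N + 2) r s (q + 1) k g A (fun i ↦ C (σ i)) (extB (N + 2) B b) =
      (-1 : ℂ) ^ ((N + m) / 2 + 1 + s + q) * b ^ (2 * s) * g b *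
        (∏ a, (1 - A a ^ 2 * (b ^ 2)⁻¹)) *
        ∑ σ : Perm (Fin (q + 1)), ((Perm.sign σ : ℤ) : ℂ) *
          ((∏ i : Fin q, (1 - C (σ i.castSucc) ^ 2 * (b ^ 2)⁻¹)) *
            C (σ (Fin.last q)) ^ ((N : ℤ) + 1 - 2 * s) *
            Pcyc m N r s q k g A (fun i ↦ C (σ i.castSucc)) B) := by
  have exponent : (N : ℤ) - 1 - 2 * s = N + 1 - 2 * s - 2 := by ring
  set common := (∏ j, B j) ^ s * (∏ a, A a ^ k a) * Dval m N g r A B with common_def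
  set factor := (-1) ^ ((N + m) / 2 + 1 + s) * b ^ (2 * s) * g b *
    ∏ a, (1 - A a ^ 2 * (b ^ 2)⁻¹) with factor_def
  calc
    _ = factor * common * ∑ σ : Perm (Fin (q + 1)), ((Perm.sign σ : ℤ) : ℂ) *
          ∏ i, C (σ i) ^ ((N : ℤ) + 1 - 2 * s - 2 * ((i : ℕ) : ℤ)) := by
      rw [Finset.mul_sum]
      refine Finset.sum_congr rfl fun σ _ ↦ ?_
      rw [Pcyc_extB A hm hg s k _ hdist, mul_left_comm]
    _ = factor * common * ((-1) ^ q * ∑ σ : Perm (Fin (q + 1)), ((Perm.sign σ : ℤ) : ℂ) *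
          ((∏ i : Fin q, (1 - C (σ i.castSucc) ^ 2 * (b ^ 2)⁻¹)) *
            C (σ (Fin.last q)) ^ ((N : ℤ) + 1 - 2 * s) *
            ∏ i : Fin q, C (σ i.castSucc) ^ ((N : ℤ) + 1 - 2 * s - 2 - 2 * ((i : ℕ) : ℤ)))) := by
      rw [sum_sign_mul_prod_zpow_eq C hC]
    _ = _ := by
      simp only [Pcyc_eq_mul_prod_zpow, exponent, ← common_def, mul_left_comm _ common,
        ← Finset.mul_sum]
      rw [pow_add _ _ q, factor_def]
      ring

end Factorization

/-- Factorization of the cycles `P_n` under the kinematical specialization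
`B_{n−1} = B`, `B_n = −B`: with `ℓ = r + (n−m)/2`,
`Asym P'_n(A₁,…,A_r, A_{σ(r+1)},…,A_{σ(ℓ)} | B₁,…,B_{n−2},B,−B)
 = (−1)^{(n+m)/2+s+ℓ−r−1}·B^{2s}·g(B)·∏_{a=1}^{r}(1−A_a²B⁻²)
   ·Asym(∏_{a=r+1}^{ℓ−1}(1−A_{σ(a)}²B⁻²)·A_{σ(ℓ)}^{n−1−2s}
     ·P'_{n−2}(A₁,…,A_r,A_{σ(r+1)},…,A_{σ(ℓ−1)} | B₁,…,B_{n−2}))`. -/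
theorem Pcyc_factorization (m n : ℕ) (hm : Even m) (hn : Even n) (hmn : m + 2 ≤ n)
    (r s : ℕ) (k : Fin r → ℕ) (g : ℂ → ℂ) (hg : ∀ z, g (-z) = g z)
    (A : Fin r → ℂ) (hA : ∀ a, A a ≠ 0)
    (C : Fin ((n - m) / 2) → ℂ) (hC : ∀ b, C b ≠ 0)
    (B : Fin (n - 2) → ℂ) (Bn : ℂ) (hB : ∀ j, B j ≠ 0) (hBn : Bn ≠ 0)
    (hdist : Function.Injective (extB n B Bn)) :
    ∑ σ : Equiv.Perm (Fin ((n - m) / 2)), ((Equiv.Perm.sign σ : ℤ) : ℂ) *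
        Pcyc m n r s ((n - m) / 2) k g A (fun b => C (σ b)) (extB n B Bn) =
      (-1 : ℂ) ^ ((n + m) / 2 + s + ((n - m) / 2 - 1)) * Bn ^ (2 * s) * g Bn *
        (∏ a, (1 - (A a) ^ 2 * (Bn ^ 2)⁻¹)) *
        ∑ σ : Equiv.Perm (Fin ((n - m) / 2)), ((Equiv.Perm.sign σ : ℤ) : ℂ) *
          ((∏ b ∈ Finset.univ.filter
              (fun b : Fin ((n - m) / 2) => (b : ℕ) < (n - m) / 2 - 1),
              (1 - (C (σ b)) ^ 2 * (Bn ^ 2)⁻¹)) *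
            (C (σ ⟨(n - m) / 2 - 1, by omega⟩)) ^ ((n : ℤ) - 1 - 2 * (s : ℤ)) *
            Pcyc m (n - 2) r s ((n - 2 - m) / 2) k g A
              (fun b : Fin ((n - 2 - m) / 2) => C (σ ⟨(b : ℕ), by omega⟩)) B) := by
  obtain ⟨N, rfl⟩ := Nat.exists_eq_add_of_le' (by omega : 2 ≤ n)
  have hq : (N + 2 - m) / 2 = (N + 2 - 2 - m) / 2 + 1 := by omega
  have half_eq : (N + 2 + m) / 2 = (N + m) / 2 + 1 := by omega
  have exponent : ((N + 2 : ℕ) : ℤ) - 1 - 2 * s = N + 1 - 2 * s := by push_cast; ring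
  generalize_proofs
  generalize (N + 2 - 2 - m) / 2 = q, (N + 2 - m) / 2 = Q at *
  subst hq
  simp only [half_eq, exponent, Nat.add_sub_cancel, prod_filter_val_lt_univ_castSucc]
  exact Pcyc_factorization_general A (by omega) hg s q k C hC hB hdist
end

section
/- Gamma-product identity for the residue constant with S-matrix factors: let n ≥ 2 be an even integer and let γ, β₁,…,β_{n−2} ∈ ℂ satisfy γ − β_j ∉ πi·ℤ for all j. Then (2πi)^{−(n−2)} · ∏_{j=1}^{n−2} [ e^{(γ+πi−β_j)/2}·Γ((γ−β_j+3πi)/(2πi))·Γ((γ−β_j+2πi)/(−2πi)) ] · ∏_{j=1}^{n−2} (γ−β_j+2πi)/(γ−β_j+πi) = (−1)^{n/2−1}·(−2π)^{n/2−1} · e^{(1/2)·∑_{j=1}^{n−2}(γ−β_j)} · ∏_{j=1}^{n−2} [ Γ₁(−i(β_j−γ)+π) · Γ₁(i(β_j−γ)) ] · ∏_{j=1}^{n−2} S₀(γ−β_j). -/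
open Complex Finset

/-- `Γ₁(x) := (2π)^{x/(2π) − 1}·Γ(x/(2π))`, with the principal complex power
of the positive real number `2π`. -/
noncomputable def Gamma1 (x : ℂ) : ℂ :=
  (2 * (Real.pi : ℂ)) ^ (x / (2 * Real.pi) - 1) * Complex.Gamma (x / (2 * Real.pi))

/-- The scalar factor `S₀(β)` of the SU(2) ITM S-matrix. -/
noncomputable def S0 (β : ℂ) : ℂ :=
  Complex.Gamma (1/2 + β / (2 * Real.pi * Complex.I)) *
    Complex.Gamma (-β / (2 * Real.pi * Complex.I)) /
  (Complex.Gamma (1/2 - β / (2 * Real.pi * Complex.I)) *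
    Complex.Gamma (β / (2 * Real.pi * Complex.I)))

/-!
The identity holds factor by factor. Put `γ - β_j = 2πi z`. On the left, the rational factor
`(z + 1) / (z + 1/2)` undoes one step of the recurrence in each Gamma function, leaving
`-Γ(1/2 + z) Γ(-z)`. On the right, the denominator of `S₀` cancels the Gamma functions of the two
`Γ₁`, leaving `(2π)^(-3/2) Γ(1/2 + z) Γ(-z)`. Each index therefore contributes the constant
`-√(2π)`, whose square is `2π = (-1)(-2π)`; the number of indices is even.
-/

section

open scoped Real

theorem two_pi_ne_zero : (2 * π : ℂ) ≠ 0 :=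
  mul_ne_zero two_ne_zero (ofReal_ne_zero.mpr Real.pi_ne_zero)

theorem Gamma_add_three_halves_mul_Gamma_neg_sub_one {z : ℂ} (hz_half : z + 1 / 2 ≠ 0)
    (hz_one : z + 1 ≠ 0) :
    Gamma (z + 1 / 2 + 1) * Gamma (-z - 1) * ((z + 1) / (z + 1 / 2)) =
      -(Gamma (1 / 2 + z) * Gamma (-z)) := by
  have hz_neg : -z - 1 ≠ 0 := fun hz => hz_one (by linear_combination -hz)
  have Gamma_neg : Gamma (-z) = (-z - 1) * Gamma (-z - 1) := by
    rw [← Gamma_add_one _ hz_neg, sub_add_cancel]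
  rw [Gamma_add_one _ hz_half, Gamma_neg, add_comm (1 / 2) z, mul_div_assoc', div_eq_iff hz_half]
  ring

theorem exp_add_pi_mul_I_div_two (d : ℂ) : exp ((d + π * I) / 2) = I * exp (d / 2) := by
  rw [add_div, mul_div_right_comm, exp_add, exp_pi_div_two_mul_I, mul_comm]

theorem Gamma1_two_pi_mul (z : ℂ) : Gamma1 (2 * π * z) = (2 * π : ℂ) ^ (z - 1) * Gamma z := by
  rw [Gamma1, mul_div_cancel_left₀ z two_pi_ne_zero]

theorem Gamma1_mul_Gamma1 (z w : ℂ) :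
    Gamma1 (2 * π * z) * Gamma1 (2 * π * w) =
      (2 * π : ℂ) ^ (z + w - 2) * (Gamma z * Gamma w) := by
  rw [Gamma1_two_pi_mul, Gamma1_two_pi_mul, mul_mul_mul_comm, ← cpow_add _ _ two_pi_ne_zero]
  ring_nf

theorem S0_two_pi_I_mul (z : ℂ) :
    S0 (2 * π * I * z) =
      Gamma (1 / 2 + z) * Gamma (-z) / (Gamma (1 / 2 - z) * Gamma z) := by
  rw [S0, neg_div, mul_div_cancel_left₀ z two_pi_I_ne_zero]

theorem Gamma1_mul_Gamma1_mul_S0 {z : ℂ} (hz_zero : Gamma z ≠ 0)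
    (hz_half : Gamma (1 / 2 - z) ≠ 0) :
    Gamma1 (2 * π * (1 / 2 - z)) * Gamma1 (2 * π * z) * S0 (2 * π * I * z) =
      (2 * π : ℂ) ^ (-3 / 2 : ℂ) * (Gamma (1 / 2 + z) * Gamma (-z)) := by
  rw [Gamma1_mul_Gamma1, S0_two_pi_I_mul, mul_assoc,
    mul_div_cancel₀ _ (mul_ne_zero hz_half hz_zero)]
  ring_nf

theorem two_pi_cpow_half_mul_cpow_neg_three_halves :
    (2 * π : ℂ) ^ (1 / 2 : ℂ) * (2 * π : ℂ) ^ (-3 / 2 : ℂ) = (2 * π : ℂ)⁻¹ := by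
  rw [← cpow_add _ _ two_pi_ne_zero, ← cpow_neg_one]
  norm_num

theorem residue_factor_two_pi_I_mul {z : ℂ} (hz : ∀ k : ℤ, z ≠ k / 2) :
    (2 * π * I)⁻¹ *
        (I * exp (2 * π * I * z / 2) * Gamma (z + 1 / 2 + 1) * Gamma (-z - 1)) *
        ((z + 1) / (z + 1 / 2)) =
      -(2 * π : ℂ) ^ (1 / 2 : ℂ) * exp (2 * π * I * z / 2) *
        (Gamma1 (2 * π * (1 / 2 - z)) * Gamma1 (2 * π * z)) * S0 (2 * π * I * z) := by
  have hz_half : z + 1 / 2 ≠ 0 := fun h => hz (-1) (by push_cast; linear_combination h)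
  have hz_one : z + 1 ≠ 0 := fun h => hz (-2) (by push_cast; linear_combination h)
  have Gamma_z : Gamma z ≠ 0 :=
    Gamma_ne_zero fun m h => hz (-2 * m) (by push_cast; linear_combination h)
  have Gamma_half_sub : Gamma (1 / 2 - z) ≠ 0 :=
    Gamma_ne_zero fun m h => hz (2 * m + 1) (by push_cast; linear_combination -h)
  have inv_mul_I : (2 * π * I)⁻¹ * I = (2 * π : ℂ)⁻¹ := by
    rw [mul_inv, inv_mul_cancel_right₀ I_ne_zero]
  calc
    _ = (2 * π : ℂ)⁻¹ * exp (2 * π * I * z / 2) *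
          (Gamma (z + 1 / 2 + 1) * Gamma (-z - 1) * ((z + 1) / (z + 1 / 2))) := by
      rw [← inv_mul_I]
      ring
    _ = -(2 * π : ℂ) ^ (1 / 2 : ℂ) * exp (2 * π * I * z / 2) *
          ((2 * π : ℂ) ^ (-3 / 2 : ℂ) * (Gamma (1 / 2 + z) * Gamma (-z))) := by
      rw [Gamma_add_three_halves_mul_Gamma_neg_sub_one hz_half hz_one,
        ← two_pi_cpow_half_mul_cpow_neg_three_halves]
      ring
    _ = _ := by
      rw [← Gamma1_mul_Gamma1_mul_S0 Gamma_z Gamma_half_sub, mul_assoc _ (_ * _) (S0 _)]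

theorem residue_factor_eq {d : ℂ} (hd : ∀ k : ℤ, d ≠ k * (π * I)) :
    (2 * π * I)⁻¹ *
        (exp ((d + π * I) / 2) * Gamma ((d + 3 * π * I) / (2 * π * I)) *
          Gamma ((d + 2 * π * I) / (-(2 * π * I)))) *
        ((d + 2 * π * I) / (d + π * I)) =
      -(2 * π : ℂ) ^ (1 / 2 : ℂ) * exp (d / 2) *
        (Gamma1 (I * d + π) * Gamma1 (-I * d)) * S0 d := by
  obtain ⟨z, rfl⟩ : ∃ z : ℂ, d = 2 * π * I * z :=
    ⟨d / (2 * π * I), (mul_div_cancel₀ d two_pi_I_ne_zero).symm⟩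
  have hz (k : ℤ) : z ≠ k / 2 := fun h => hd k (by rw [h]; ring)
  have shift_three : (2 * π * I * z + 3 * π * I) / (2 * π * I) = z + 1 / 2 + 1 := by
    rw [div_eq_iff two_pi_I_ne_zero]; ring
  have shift_two : (2 * π * I * z + 2 * π * I) / (-(2 * π * I)) = -z - 1 := by
    rw [div_eq_iff (neg_ne_zero.mpr two_pi_I_ne_zero)]; ring
  have ratio : (2 * π * I * z + 2 * π * I) / (2 * π * I * z + π * I) = (z + 1) / (z + 1 / 2) := by
    rw [← mul_div_mul_left (z + 1) (z + 1 / 2) two_pi_I_ne_zero]; ring_nf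
  have arg_half_sub : I * (2 * π * I * z) + π = 2 * π * (1 / 2 - z) := by
    linear_combination 2 * π * z * I_sq
  have arg_z : -I * (2 * π * I * z) = 2 * π * z := by
    linear_combination -2 * π * z * I_sq
  rw [exp_add_pi_mul_I_div_two, shift_three, shift_two, ratio, arg_half_sub, arg_z]
  exact residue_factor_two_pi_I_mul hz

theorem neg_two_pi_cpow_half_pow_two_mul (m : ℕ) :
    (-(2 * π : ℂ) ^ (1 / 2 : ℂ)) ^ (2 * m) = (-1) ^ m * (-2 * π : ℂ) ^ m := by
  rw [pow_mul, neg_sq, one_div, cpow_ofNat_inv_pow, ← mul_pow]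
  ring

theorem gamma_product_Un_smatrix_general {ι : Type*} (s : Finset ι) (γ : ℂ) (β : ι → ℂ)
    (h : ∀ j ∈ s, ∀ k : ℤ, γ - β j ≠ k * (π * I)) :
    (2 * π * I) ^ (-(#s : ℤ)) *
        (∏ j ∈ s, (exp ((γ + π * I - β j) / 2) *
          Gamma ((γ - β j + 3 * π * I) / (2 * π * I)) *
          Gamma ((γ - β j + 2 * π * I) / (-(2 * π * I))))) *
        ∏ j ∈ s, ((γ - β j + 2 * π * I) / (γ - β j + π * I)) =
      (-(2 * π : ℂ) ^ (1 / 2 : ℂ)) ^ #s * exp ((1 / 2) * ∑ j ∈ s, (γ - β j)) *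
        (∏ j ∈ s, (Gamma1 (-I * (β j - γ) + π) * Gamma1 (I * (β j - γ)))) *
        ∏ j ∈ s, S0 (γ - β j) := by
  rw [zpow_neg, zpow_natCast, ← inv_pow, mul_sum, exp_sum]
  simp only [← prod_const, ← prod_mul_distrib]
  refine prod_congr rfl fun j hj => ?_
  convert residue_factor_eq (h j hj) using 3 <;> ring_nf

end

/-- Gamma-product identity for the residue constant with S-matrix factors:
for even `n ≥ 2` and `γ − β_j ∉ πi·ℤ`,
`(2πi)^{−(n−2)}·∏_j [e^{(γ+πi−β_j)/2}·Γ((γ−β_j+3πi)/(2πi))·Γ((γ−β_j+2πi)/(−2πi))]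
    ·∏_j (γ−β_j+2πi)/(γ−β_j+πi)
 = (−1)^{n/2−1}·(−2π)^{n/2−1}·e^{(1/2)∑_j(γ−β_j)}
    ·∏_j [Γ₁(−i(β_j−γ)+π)·Γ₁(i(β_j−γ))]·∏_j S₀(γ−β_j)`. -/
theorem gamma_product_Un_smatrix (n : ℕ) (hn : Even n) (h2 : 2 ≤ n)
    (γ : ℂ) (β : Fin (n - 2) → ℂ)
    (h : ∀ j (k : ℤ), γ - β j ≠ (k : ℂ) * (Real.pi * Complex.I)) :
    (2 * Real.pi * Complex.I) ^ (-((n : ℤ) - 2)) *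
        (∏ j, (Complex.exp ((γ + Real.pi * Complex.I - β j) / 2) *
          Complex.Gamma ((γ - β j + 3 * Real.pi * Complex.I) / (2 * Real.pi * Complex.I)) *
          Complex.Gamma ((γ - β j + 2 * Real.pi * Complex.I) / (-(2 * Real.pi * Complex.I))))) *
        ∏ j, ((γ - β j + 2 * Real.pi * Complex.I) / (γ - β j + Real.pi * Complex.I)) =
      (-1 : ℂ) ^ (n / 2 - 1) * (-2 * Real.pi : ℂ) ^ (n / 2 - 1) *
        Complex.exp ((1 / 2) * ∑ j, (γ - β j)) *
        (∏ j, (Gamma1 (-Complex.I * (β j - γ) + Real.pi) *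
          Gamma1 (Complex.I * (β j - γ)))) *
        ∏ j, S0 (γ - β j) := by
  have half : n - 2 = 2 * (n / 2 - 1) := by grind
  have exponent : -((n : ℤ) - 2) = -(#(univ : Finset (Fin (n - 2))) : ℤ) := by
    rw [card_fin, Nat.cast_sub h2, Nat.cast_ofNat]
  rw [exponent, gamma_product_Un_smatrix_general univ γ β fun j _ => h j,
    ← neg_two_pi_cpow_half_pow_two_mul, ← half, card_fin]
end
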